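/- Let r = p/q be a rational function that is real on ℝ with deg p ≤ deg q (so that r is bounded at infinity). Then there exist rational functions r₊ and r₋ such that: the set of poles of r₊ is precisely the set of poles of r lying in C₋; the set of poles of r₋ is precisely the set of poles of r lying in C₊; r(z) = (r₊(z) + r₋(z))/2 for all z ∈ ℂ that are not poles of r; r₋(z) = conj(r₊(conj z)) for all such z; and r(x) = Re r₊(x) for all x ∈ ℝ. -/

import Mathlib

open Polynomial

/-!
Normalise `q` to be monic. A reduced fraction that is real on `ℝ` then has real coefficients, so
the roots of `q` come in conjugate pairs and `q = a ā`, where `a` collects the roots of `q` in the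
lower half-plane and `ā` is its coefficientwise conjugate. Since `a` and `ā` are coprime,
`u a + v ā = 1` for some polynomials `u` and `v`. Multiplying by `p` and adding the conjugate
identity gives `2 p = w ā + w̄ a` with `w = p (v + ū)`, that is, `2 p / q = w / a + w̄ / ā`, and
`r₊ = w / a`. No pole cancels, because a common root of `w` and `a` would be one of `p` and `q`.
-/

theorem exists_isCoprime_mul_add_mul_eq_two_mul {A : Type*} [CommRing A] {σ : A →+* A}
    (hσ : Function.Involutive σ) (h2 : IsUnit (2 : A)) {p a : A} (hp : σ p = p)
    (hpa : IsCoprime p a) (ha : IsCoprime a (σ a)) :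
    ∃ w, IsCoprime w a ∧ w * σ a + σ w * a = 2 * p := by
  obtain ⟨u, v, huv⟩ := ha
  have huv' : σ u * σ a + σ v * a = 1 := by
    simpa only [map_add, map_mul, map_one, hσ a] using congrArg σ huv
  have hsplit : p * (v + σ u) * σ a + σ (p * (v + σ u)) * a = 2 * p := by
    simp only [map_mul, map_add, hσ u, hp]
    linear_combination p * huv + p * huv'
  have hcop : IsCoprime (p * (v + σ u) * σ a + σ (p * (v + σ u)) * a) a :=
    hsplit ▸ (isCoprime_mul_unit_left_left h2 p a).2 hpa
  exact ⟨p * (v + σ u), hcop.of_add_mul_right_left.of_mul_left_left, hsplit⟩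

section RootFactor

variable {R : Type*} [CommRing R] [IsDomain R] {K L : Type*} [Field K] [Field L]

open Classical in
/-- The part of `q` with roots in `S`: the monic polynomial whose roots are the roots of `q` lying
in `S`, with the same multiplicities (`1` if `q = 0`). It splits off from a denominator the poles
lying in `S`. -/
noncomputable def rootFactor (q : R[X]) (S : Set R) : R[X] :=
  ((q.roots.filter (· ∈ S)).map fun z ↦ X - C z).prod

theorem monic_rootFactor (q : R[X]) (S : Set R) : (rootFactor q S).Monic :=
  monic_multiset_prod_of_monic _ _ fun z _ ↦ monic_X_sub_C z

theorem isRoot_rootFactor {q : R[X]} (hq : q ≠ 0) {S : Set R} {z : R} :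
    (rootFactor q S).IsRoot z ↔ q.IsRoot z ∧ z ∈ S := by
  classical
  rw [← mem_roots (monic_rootFactor q S).ne_zero, rootFactor, roots_multiset_prod_X_sub_C,
    Multiset.mem_filter, mem_roots hq]

theorem rootFactor_mul_rootFactor {q : R[X]} (hmonic : q.Monic) (hsplits : q.Splits)
    {S T : Set R} (hST : Disjoint S T) (hroots : ∀ z, q.IsRoot z → z ∈ S ∪ T) :
    rootFactor q S * rootFactor q T = q := by
  classical
  have hcover : q.roots.filter (· ∈ S) + q.roots.filter (· ∈ T) = q.roots := by
    have hunion : q.roots.filter (fun z ↦ z ∈ S ∨ z ∈ T) = q.roots :=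
      Multiset.filter_eq_self.2 fun z hz ↦ hroots z (isRoot_of_mem_roots hz)
    have hinter : q.roots.filter (fun z ↦ z ∈ S ∧ z ∈ T) = 0 :=
      Multiset.filter_eq_nil.2 fun z _ hz ↦ hST.notMem_of_mem_left hz.1 hz.2
    rw [Multiset.filter_add_filter, hunion, hinter, add_zero]
  rw [rootFactor, rootFactor, ← Multiset.prod_add, ← Multiset.map_add, hcover,
    ← hsplits.eq_prod_roots_of_monic hmonic]

theorem isCoprime_multiset_prod_left {A : Type*} [CommSemiring A] {s : Multiset A} {b : A}
    (h : ∀ a ∈ s, IsCoprime a b) : IsCoprime s.prod b :=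
  Multiset.prod_induction (IsCoprime · b) s (fun _ _ ↦ IsCoprime.mul_left) isCoprime_one_left h

theorem isCoprime_rootFactor (q : K[X]) {S T : Set K} (hST : Disjoint S T) :
    IsCoprime (rootFactor q S) (rootFactor q T) := by
  classical
  refine isCoprime_multiset_prod_left fun a ha ↦
    (isCoprime_multiset_prod_left fun b hb ↦ ?_).symm
  obtain ⟨z, hz, rfl⟩ := Multiset.mem_map.1 ha
  obtain ⟨w, hw, rfl⟩ := Multiset.mem_map.1 hb
  have hne : w ≠ z := (hST.ne_of_mem (Multiset.mem_filter.1 hz).2 (Multiset.mem_filter.1 hw).2).symm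
  exact isCoprime_X_sub_C_of_isUnit_sub (sub_ne_zero.2 hne).isUnit

theorem map_rootFactor (f : K →+* L) {q : K[X]} (hq : q.Splits) (S : Set K) :
    (rootFactor q S).map f = rootFactor (q.map f) (f '' S) := by
  classical
  have hfilter : (q.map f).roots.filter (· ∈ f '' S) = (q.roots.filter (· ∈ S)).map f := by
    rw [hq.roots_map, Multiset.filter_map]
    simp only [Function.comp_def, f.injective.mem_set_image]
  rw [rootFactor, rootFactor, hfilter, Polynomial.map_multiset_prod]
  simp

end RootFactor

section PolyConj

variable {R : Type*} [CommSemiring R] [StarRing R]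

/-- Coefficientwise conjugation of polynomials, as a ring homomorphism. Its fixed points in `ℂ[X]`
are the polynomials with real coefficients. -/
noncomputable def polyConj : R[X] →+* R[X] :=
  mapRingHom (starRingEnd R)

theorem polyConj_involutive : Function.Involutive (polyConj : R[X] →+* R[X]) := fun p ↦ by
  ext n
  simp [polyConj]

theorem eval_polyConj (p : R[X]) (z : R) :
    (polyConj p).eval z = starRingEnd R (p.eval (starRingEnd R z)) := by
  simpa [polyConj] using eval_map_apply (f := starRingEnd R) (p := p) (starRingEnd R z)

theorem polyConj_eq_self_of_isCoprime_of_monic {R : Type*} [CommRing R] [IsDomain R] [StarRing R]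
    {p q : R[X]} (hcop : IsCoprime p q) (hq : q.Monic)
    (hcross : polyConj p * q = p * polyConj q) : polyConj p = p ∧ polyConj q = q := by
  have hdvd : q ∣ polyConj q := hcop.symm.dvd_of_dvd_mul_left (hcross ▸ dvd_mul_left q _)
  have hq_real : polyConj q = q :=
    eq_of_monic_of_dvd_of_natDegree_le hq (hq.map _) hdvd natDegree_map_le
  exact ⟨mul_right_cancel₀ hq.ne_zero (by rw [hcross, hq_real]), hq_real⟩

theorem exists_eq_C_mul_and_polyConj_eq_self {K : Type*} [Field K] [StarRing K] {p q : K[X]}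
    (hq : q ≠ 0) (hcop : IsCoprime p q) (hcross : polyConj p * q = p * polyConj q) :
    ∃ c ≠ 0, ∃ p₁ q₁ : K[X], p = C c * p₁ ∧ q = C c * q₁ ∧ IsCoprime p₁ q₁ ∧ q₁.Monic ∧
      polyConj p₁ = p₁ ∧ polyConj q₁ = q₁ := by
  set c := q.leadingCoeff
  have hc : c ≠ 0 := leadingCoeff_ne_zero.2 hq
  have hmonic : (C c⁻¹ * q).Monic := mul_comm q (C c⁻¹) ▸ monic_mul_leadingCoeff_inv hq
  have hcop₁ : IsCoprime (C c⁻¹ * p) (C c⁻¹ * q) :=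
    (isCoprime_mul_unit_left (isUnit_C.2 (inv_ne_zero hc).isUnit) p q).2 hcop
  have hcross₁ : polyConj (C c⁻¹ * p) * (C c⁻¹ * q) = C c⁻¹ * p * polyConj (C c⁻¹ * q) := by
    simp only [map_mul]
    linear_combination polyConj (C c⁻¹) * C c⁻¹ * hcross
  have hscale (f : K[X]) : f = C c * (C c⁻¹ * f) := by
    rw [← mul_assoc, ← C_mul, mul_inv_cancel₀ hc, C_1, one_mul]
  exact ⟨c, hc, _, _, hscale p, hscale q, hcop₁, hmonic,
    polyConj_eq_self_of_isCoprime_of_monic hcop₁ hmonic hcross₁⟩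

end PolyConj

theorem eq_of_eval_ofReal_eq {p q : ℂ[X]} (h : ∀ x : ℝ, p.eval (x : ℂ) = q.eval (x : ℂ)) :
    p = q := by
  refine eq_of_infinite_eval_eq p q
    ((Set.infinite_range_of_injective Complex.ofReal_injective).mono ?_)
  rintro _ ⟨x, rfl⟩
  exact h x

theorem polyConj_mul_eq_mul_polyConj {p q : ℂ[X]} (hnopole : ∀ x : ℝ, q.eval (x : ℂ) ≠ 0)
    (hreal : ∀ x : ℝ, (p.eval (x : ℂ) / q.eval (x : ℂ)).im = 0) :
    polyConj p * q = p * polyConj q := by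
  refine eq_of_eval_ofReal_eq fun x ↦ ?_
  have hconj := Complex.conj_eq_iff_im.2 (hreal x)
  rw [map_div₀, div_eq_div_iff ((_root_.map_ne_zero _).2 (hnopole x)) (hnopole x)] at hconj
  simpa only [eval_mul, eval_polyConj, Complex.conj_ofReal] using hconj

theorem conj_image_im_neg : starRingEnd ℂ '' {z | z.im < 0} = {z | 0 < z.im} := by
  rw [Set.image_eq_preimage_of_inverse Complex.conj_conj Complex.conj_conj]
  ext z
  simp

theorem disjoint_im_neg_im_pos : Disjoint {z : ℂ | z.im < 0} {z : ℂ | 0 < z.im} :=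
  Set.disjoint_left.2 fun z (hneg : z.im < 0) (hpos : 0 < z.im) ↦ lt_asymm hneg hpos

theorem polyConj_rootFactor_im_neg {q : ℂ[X]} (hq : polyConj q = q) :
    polyConj (rootFactor q {z | z.im < 0}) = rootFactor q {z | 0 < z.im} :=
  calc polyConj (rootFactor q {z | z.im < 0})
      = rootFactor (polyConj q) (starRingEnd ℂ '' {z | z.im < 0}) :=
        map_rootFactor (starRingEnd ℂ) (IsAlgClosed.splits q) _
    _ = rootFactor q {z | 0 < z.im} := by rw [hq, conj_image_im_neg]

theorem rootFactor_im_neg_mul_rootFactor_im_pos {q : ℂ[X]} (hq : q.Monic)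
    (hnopole : ∀ x : ℝ, q.eval (x : ℂ) ≠ 0) :
    rootFactor q {z | z.im < 0} * rootFactor q {z | 0 < z.im} = q := by
  refine rootFactor_mul_rootFactor hq (IsAlgClosed.splits q) disjoint_im_neg_im_pos fun z hz ↦ ?_
  refine lt_or_gt_of_ne fun him : z.im = 0 ↦ hnopole z.re ?_
  rwa [show (z.re : ℂ) = z from Complex.ext rfl him.symm]

theorem exists_isCoprime_div_eq_add_polyConj_div {p q : ℂ[X]} (hq : q.Monic)
    (hcop : IsCoprime p q) (hnopole : ∀ x : ℝ, q.eval (x : ℂ) ≠ 0)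
    (hp_real : polyConj p = p) (hq_real : polyConj q = q) :
    ∃ w, IsCoprime w (rootFactor q {z | z.im < 0}) ∧
      ∀ z, q.eval z ≠ 0 → p.eval z / q.eval z =
        (w.eval z / (rootFactor q {z | z.im < 0}).eval z +
          (polyConj w).eval z / (rootFactor q {z | 0 < z.im}).eval z) / 2 := by
  set a := rootFactor q {z | z.im < 0}
  set b := rootFactor q {z | 0 < z.im}
  have hconj : polyConj a = b := polyConj_rootFactor_im_neg hq_real
  have hab : a * b = q := rootFactor_im_neg_mul_rootFactor_im_pos hq hnopole
  have hcop_ab : IsCoprime a (polyConj a) :=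
    hconj ▸ isCoprime_rootFactor q disjoint_im_neg_im_pos
  have htwo : IsUnit (2 : ℂ[X]) := (IsUnit.mk0 (2 : ℂ) two_ne_zero).map C
  have hcop_a : IsCoprime p a := (hab ▸ hcop).of_mul_right_left
  obtain ⟨w, hw, hsplit⟩ :=
    exists_isCoprime_mul_add_mul_eq_two_mul polyConj_involutive htwo hp_real hcop_a hcop_ab
  refine ⟨w, hw, fun z hz ↦ ?_⟩
  rw [← hab, eval_mul] at hz ⊢
  have ha : a.eval z ≠ 0 := left_ne_zero_of_mul hz
  have hb : b.eval z ≠ 0 := right_ne_zero_of_mul hz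
  have hsplit_z : w.eval z * b.eval z + (polyConj w).eval z * a.eval z = 2 * p.eval z := by
    simpa only [hconj, eval_add, eval_mul, eval_ofNat] using congrArg (eval z) hsplit
  field_simp
  linear_combination -hsplit_z

theorem statement_8_general
    (p q : Polynomial ℂ) (hcop : IsCoprime p q)
    (hnopole : ∀ x : ℝ, q.eval (x : ℂ) ≠ 0)
    (hreal : ∀ x : ℝ, (p.eval (x : ℂ) / q.eval (x : ℂ)).im = 0) :
    ∃ pp qp pm qm : Polynomial ℂ,
      qp ≠ 0 ∧ qm ≠ 0 ∧ IsCoprime pp qp ∧ IsCoprime pm qm ∧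
      {z : ℂ | qp.eval z = 0} = {z : ℂ | q.eval z = 0 ∧ z.im < 0} ∧
      {z : ℂ | qm.eval z = 0} = {z : ℂ | q.eval z = 0 ∧ 0 < z.im} ∧
      (∀ z : ℂ, q.eval z ≠ 0 →
        p.eval z / q.eval z = (pp.eval z / qp.eval z + pm.eval z / qm.eval z) / 2 ∧
        pm.eval z / qm.eval z =
          (starRingEnd ℂ) (pp.eval ((starRingEnd ℂ) z) / qp.eval ((starRingEnd ℂ) z))) ∧
      (∀ x : ℝ, p.eval (x : ℂ) / q.eval (x : ℂ) =
        (((pp.eval (x : ℂ) / qp.eval (x : ℂ)).re : ℝ) : ℂ)) := by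
  have hq : q ≠ 0 := fun h ↦ hnopole 0 (by rw [h, eval_zero])
  obtain ⟨c, hc, p, q, rfl, rfl, hcop, hmonic, hp_real, hq_real⟩ :=
    exists_eq_C_mul_and_polyConj_eq_self hq hcop (polyConj_mul_eq_mul_polyConj hnopole hreal)
  simp only [eval_C_mul, mul_div_mul_left _ _ hc, mul_eq_zero, hc, false_or, ne_eq] at hnopole ⊢
  have hconj := polyConj_rootFactor_im_neg hq_real
  obtain ⟨w, hw, hsplit⟩ :=
    exists_isCoprime_div_eq_add_polyConj_div hmonic hcop hnopole hp_real hq_real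
  refine ⟨w, rootFactor q {z | z.im < 0}, polyConj w, rootFactor q {z | 0 < z.im},
    (monic_rootFactor _ _).ne_zero, (monic_rootFactor _ _).ne_zero, hw, hconj ▸ hw.map polyConj,
    Set.ext fun z ↦ isRoot_rootFactor hmonic.ne_zero,
    Set.ext fun z ↦ isRoot_rootFactor hmonic.ne_zero, fun z hz ↦ ⟨hsplit z hz, ?_⟩, fun x ↦ ?_⟩
  · rw [← hconj, eval_polyConj, eval_polyConj, map_div₀]
  · rw [hsplit x (hnopole x), ← hconj, eval_polyConj, eval_polyConj, ← map_div₀,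
      Complex.conj_ofReal, Complex.re_eq_add_conj]

/-- a rational function `r = p/q` (coprime, `q ≠ 0`), real on `ℝ` and with
`deg p ≤ deg q` (bounded at infinity), splits as `r = (r₊ + r₋)/2` where the poles of
`r₊` are precisely the poles of `r` in the lower half-plane, the poles of `r₋` are
precisely the poles of `r` in the upper half-plane, `r₋(z) = conj (r₊ (conj z))` away
from the poles of `r`, and `r(x) = Re r₊(x)` for all real `x`. -/
theorem statement_8
    (p q : Polynomial ℂ) (hq : q ≠ 0) (hcop : IsCoprime p q)
    (hnopole : ∀ x : ℝ, q.eval (x : ℂ) ≠ 0)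
    (hreal : ∀ x : ℝ, (p.eval (x : ℂ) / q.eval (x : ℂ)).im = 0)
    (hdeg : p.degree ≤ q.degree) :
    ∃ pp qp pm qm : Polynomial ℂ,
      qp ≠ 0 ∧ qm ≠ 0 ∧ IsCoprime pp qp ∧ IsCoprime pm qm ∧
      {z : ℂ | qp.eval z = 0} = {z : ℂ | q.eval z = 0 ∧ z.im < 0} ∧
      {z : ℂ | qm.eval z = 0} = {z : ℂ | q.eval z = 0 ∧ 0 < z.im} ∧
      (∀ z : ℂ, q.eval z ≠ 0 →
        p.eval z / q.eval z = (pp.eval z / qp.eval z + pm.eval z / qm.eval z) / 2 ∧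
        pm.eval z / qm.eval z =
          (starRingEnd ℂ) (pp.eval ((starRingEnd ℂ) z) / qp.eval ((starRingEnd ℂ) z))) ∧
      (∀ x : ℝ, p.eval (x : ℂ) / q.eval (x : ℂ) =
        (((pp.eval (x : ℂ) / qp.eval (x : ℂ)).re : ℝ) : ℂ)) :=
  statement_8_general p q hcop hnopole hreal
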